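/- arXiv:1801.07524 — 2 statements merged into one kernel-verified Lean document; each statement's English description precedes it below -/
import Mathlib

section
/- Let A be a k-algebra and let t = (t_U) be a family of k-linear maps t_U : End_A(U) → k indexed by the finite-dimensional projective left A-modules U. Then t is a trace on Proj_A, i.e. t_V(g ∘ f) = t_U(f ∘ g) for all finite-dimensional projective A-modules U, V and all A-module maps f : U → V and g : V → U, if and only if the following two conditions hold: (i) t_U(g ∘ f) = t_U(f ∘ g) for all U and all f, g ∈ End_A(U); (ii) t_{U⊕V}(f) = t_U(p_U ∘ f ∘ i_U) + t_V(p_V ∘ f ∘ i_V) for all U, V and all f ∈ End_A(U ⊕ V), where i_U, i_V are the canonical injections and p_U, p_V the canonical projections of the direct sum U ⊕ V. -/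
noncomputable section

universe u

variable (k : Type u) [Field k] (A : Type u) [Ring A] [Algebra k A]

/-- A family of `k`-linear functionals on the endomorphism algebras of the
finite-dimensional projective left `A`-modules. -/
def TraceFam : Type (u + 1) :=
  ∀ (V : Type u) [AddCommGroup V] [Module k V] [Module A V] [IsScalarTower k A V],
    Module.Finite k V → Module.Projective A V → ((V →ₗ[A] V) →ₗ[k] k)

/-- `t` is a trace on `Proj_A`: `t_U(g ∘ f) = t_V(f ∘ g)` for all finite-dimensional
projective `A`-modules `U, V` and all `A`-module maps `f : U → V`, `g : V → U`. -/
def IsTrace (t : TraceFam k A) : Prop :=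
  ∀ (U : Type u) [AddCommGroup U] [Module k U] [Module A U] [IsScalarTower k A U]
    (V : Type u) [AddCommGroup V] [Module k V] [Module A V] [IsScalarTower k A V]
    (hU1 : Module.Finite k U) (hU2 : Module.Projective A U)
    (hV1 : Module.Finite k V) (hV2 : Module.Projective A V)
    (f : U →ₗ[A] V) (g : V →ₗ[A] U),
    t U hU1 hU2 (g.comp f) = t V hV1 hV2 (f.comp g)

/-- Right multiplication `ρ_a : x ↦ xa`, an endomorphism of the left regular module. -/
def rho (a : A) : A →ₗ[A] A where
  toFun x := x * a
  map_add' x y := add_mul x y a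
  map_smul' c x := mul_assoc c x a

/-!
The argument takes place in any preadditive category with binary biproducts. Since
`𝟙 = p_U ≫ i_U + p_V ≫ i_V` on `U ⊕ V`, moving the injections around by cyclicity gives additivity.
Conversely, `f : U ⟶ V` and `g : V ⟶ U` become the off-diagonal endomorphisms `p_U ≫ f ≫ i_V` and
`p_V ≫ g ≫ i_U` of the single object `U ⊕ V`, whose composites in the two orders are diagonal with
only nonzero blocks `f ≫ g` and `g ≫ f` respectively.
-/

section Preadditive

open CategoryTheory CategoryTheory.Limits

variable {C G : Type*} [Category* C] [Preadditive C] [AddZeroClass G]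

/-- The trace property for a family of additive maps on the endomorphism groups of all objects of a
preadditive category: cyclicity for composites passing through a second object. -/
def IsCategoricalTrace (t : ∀ X : C, (X ⟶ X) →+ G) : Prop :=
  ∀ ⦃X Y : C⦄ (f : X ⟶ Y) (g : Y ⟶ X), t X (f ≫ g) = t Y (g ≫ f)

/-- Additivity of a family of functionals on a direct sum: the value at an endomorphism is the sum
of the values at its two diagonal blocks. The bicone `b` supplies the injections and projections. -/
def IsAdditiveOn (t : ∀ X : C, (X ⟶ X) →+ G) {X Y : C} (b : BinaryBicone X Y) : Prop :=
  ∀ f : b.pt ⟶ b.pt, t b.pt f = t X (b.inl ≫ f ≫ b.fst) + t Y (b.inr ≫ f ≫ b.snd)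

variable {t : ∀ X : C, (X ⟶ X) →+ G} {X Y : C} {b : BinaryBicone X Y}

theorem IsCategoricalTrace.isAdditiveOn (ht : IsCategoricalTrace t) (hb : b.IsBilimit) :
    IsAdditiveOn t b := by
  intro f
  have hf : f = (f ≫ b.fst) ≫ b.inl + (f ≫ b.snd) ≫ b.inr := by
    rw [Category.assoc, Category.assoc, ← Preadditive.comp_add, IsBilimit.binary_total hb,
      Category.comp_id]
  calc
    t b.pt f = t b.pt ((f ≫ b.fst) ≫ b.inl) + t b.pt ((f ≫ b.snd) ≫ b.inr) := by
      rw [← map_add, ← hf]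
    _ = t X (b.inl ≫ f ≫ b.fst) + t Y (b.inr ≫ f ≫ b.snd) := by
      rw [ht (f ≫ b.fst) b.inl, ht (f ≫ b.snd) b.inr]

theorem IsAdditiveOn.map_fst_comp_inl (h : IsAdditiveOn t b) (f : X ⟶ X) :
    t b.pt (b.fst ≫ f ≫ b.inl) = t X f := by
  simp [h (b.fst ≫ f ≫ b.inl)]

theorem IsAdditiveOn.map_snd_comp_inr (h : IsAdditiveOn t b) (f : Y ⟶ Y) :
    t b.pt (b.snd ≫ f ≫ b.inr) = t Y f := by
  simp [h (b.snd ≫ f ≫ b.inr)]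

theorem IsAdditiveOn.map_comp_comm (h : IsAdditiveOn t b)
    (hcyc : ∀ f g : b.pt ⟶ b.pt, t b.pt (f ≫ g) = t b.pt (g ≫ f)) (f : X ⟶ Y) (g : Y ⟶ X) :
    t X (f ≫ g) = t Y (g ≫ f) :=
  calc
    t X (f ≫ g) = t b.pt (b.fst ≫ (f ≫ g) ≫ b.inl) := (h.map_fst_comp_inl _).symm
    _ = t b.pt ((b.fst ≫ f ≫ b.inr) ≫ (b.snd ≫ g ≫ b.inl)) := by simp
    _ = t b.pt ((b.snd ≫ g ≫ b.inl) ≫ (b.fst ≫ f ≫ b.inr)) := hcyc _ _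
    _ = t b.pt (b.snd ≫ (g ≫ f) ≫ b.inr) := by simp
    _ = t Y (g ≫ f) := h.map_snd_comp_inr _

theorem statement_1_general (b : ∀ X Y : C, BinaryBiproductData X Y)
    (t : ∀ X : C, (X ⟶ X) →+ G) :
    IsCategoricalTrace t ↔
      (∀ (X : C) (f g : X ⟶ X), t X (f ≫ g) = t X (g ≫ f)) ∧
        ∀ X Y : C, IsAdditiveOn t (b X Y).bicone :=
  ⟨fun ht ↦ ⟨fun _ f g ↦ ht f g, fun X Y ↦ ht.isAdditiveOn (b X Y).isBilimit⟩,
    fun ⟨hcyc, hadd⟩ X Y ↦ (hadd X Y).map_comp_comm (hcyc _)⟩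

end Preadditive

/-- The objects of `Proj_A`: the finite-dimensional projective left `A`-modules. The `k`-module
structure is part of the data, as a `TraceFam` takes it as an argument. -/
structure FinDimProj where
  carrier : Type u
  [addCommGroup : AddCommGroup carrier]
  [moduleBase : Module k carrier]
  [moduleAlgebra : Module A carrier]
  [isScalarTower : IsScalarTower k A carrier]
  finite : Module.Finite k carrier
  projective : Module.Projective A carrier

namespace FinDimProj

open CategoryTheory CategoryTheory.Limits

attribute [instance] addCommGroup moduleBase moduleAlgebra isScalarTower finite projective

variable {k A}

instance : Category (FinDimProj k A) where
  Hom U V := U.carrier →ₗ[A] V.carrier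
  id _ := LinearMap.id
  comp f g := g.comp f

instance : Preadditive (FinDimProj k A) where
  homGroup U V := inferInstanceAs (AddCommGroup (U.carrier →ₗ[A] V.carrier))
  add_comp _ _ _ f f' g := LinearMap.comp_add f f' g
  comp_add _ _ _ f g g' := LinearMap.add_comp f g' g

/-- The direct sum `U ⊕ V` in `Proj_A`, realised on the product module `U × V`. -/
def prodBicone (U V : FinDimProj k A) : BinaryBicone U V where
  pt := ⟨U.carrier × V.carrier, inferInstance, inferInstance⟩
  fst := LinearMap.fst A U.carrier V.carrier
  snd := LinearMap.snd A U.carrier V.carrier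
  inl := LinearMap.inl A U.carrier V.carrier
  inr := LinearMap.inr A U.carrier V.carrier
  inl_fst := LinearMap.fst_comp_inl A U.carrier V.carrier
  inl_snd := LinearMap.snd_comp_inl A U.carrier V.carrier
  inr_fst := LinearMap.fst_comp_inr A U.carrier V.carrier
  inr_snd := LinearMap.snd_comp_inr A U.carrier V.carrier

theorem prodBicone_total (U V : FinDimProj k A) :
    (prodBicone U V).fst ≫ (prodBicone U V).inl + (prodBicone U V).snd ≫ (prodBicone U V).inr =
      𝟙 (prodBicone U V).pt :=
  LinearMap.ext fun _ ↦ Prod.fst_add_snd _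

/-- The product module as a biproduct in `Proj_A`. -/
def prodBiproductData (U V : FinDimProj k A) : BinaryBiproductData U V where
  bicone := prodBicone U V
  isBilimit := isBinaryBilimitOfTotal _ (prodBicone_total U V)

end FinDimProj

namespace TraceFam

variable {k A}

/-- A family of functionals `t_U : End_A(U) → k`, indexed by the objects of `Proj_A` as a category
and remembering additivity only. -/
def onFinDimProj (t : TraceFam k A) (U : FinDimProj k A) :
    (U.carrier →ₗ[A] U.carrier) →+ k :=
  (t U.carrier U.finite U.projective).toAddMonoidHom

theorem isCategoricalTrace_onFinDimProj (t : TraceFam k A) :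
    IsCategoricalTrace t.onFinDimProj ↔ IsTrace k A t where
  mp ht U _ _ _ _ V _ _ _ _ hU1 hU2 hV1 hV2 f g :=
    ht (X := ⟨U, hU1, hU2⟩) (Y := ⟨V, hV1, hV2⟩) f g
  mpr ht U V f g :=
    ht U.carrier V.carrier U.finite U.projective V.finite V.projective f g

end TraceFam

/-- a family `t = (t_U)` is a trace on `Proj_A` if and only if
(i) each `t_U` is cyclic on `End_A(U)`, and (ii) `t` is additive on direct sums. -/
theorem statement_1 (t : TraceFam k A) :
    IsTrace k A t ↔
      ((∀ (U : Type u) [AddCommGroup U] [Module k U] [Module A U] [IsScalarTower k A U]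
          (hU1 : Module.Finite k U) (hU2 : Module.Projective A U)
          (f g : U →ₗ[A] U),
          t U hU1 hU2 (g.comp f) = t U hU1 hU2 (f.comp g))
       ∧ (∀ (U : Type u) [AddCommGroup U] [Module k U] [Module A U] [IsScalarTower k A U]
            (V : Type u) [AddCommGroup V] [Module k V] [Module A V] [IsScalarTower k A V]
            (hU1 : Module.Finite k U) (hU2 : Module.Projective A U)
            (hV1 : Module.Finite k V) (hV2 : Module.Projective A V)
            (hUV1 : Module.Finite k (U × V)) (hUV2 : Module.Projective A (U × V))
            (f : (U × V) →ₗ[A] (U × V)),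
            t (U × V) hUV1 hUV2 f =
              t U hU1 hU2 ((LinearMap.fst A U V).comp (f.comp (LinearMap.inl A U V)))
              + t V hV1 hV2 ((LinearMap.snd A U V).comp (f.comp (LinearMap.inr A U V))))) := by
  rw [← t.isCategoricalTrace_onFinDimProj, statement_1_general FinDimProj.prodBiproductData]
  constructor
  · rintro ⟨hcyc, hadd⟩
    exact ⟨fun U _ _ _ _ hU1 hU2 ↦ hcyc ⟨U, hU1, hU2⟩,
      fun U _ _ _ _ V _ _ _ _ hU1 hU2 hV1 hV2 _ _ ↦ hadd ⟨U, hU1, hU2⟩ ⟨V, hV1, hV2⟩⟩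
  · rintro ⟨hcyc, hadd⟩
    exact ⟨fun U ↦ hcyc U.carrier U.finite U.projective, fun U V ↦
      hadd U.carrier V.carrier U.finite U.projective V.finite V.projective _ _⟩
end
end

section
/- Let A be a finite-dimensional algebra over a field k and let t = (t_U) be a trace on Proj_A such that t_A(ρ_a) = 0 for all a ∈ A, where A is the left regular module and ρ_a is right multiplication by a. Then t_U = 0 for every finite-dimensional projective left A-module U. Consequently, the map sending a trace t on Proj_A to the symmetric linear form a ↦ t_A(ρ_a) is a linear isomorphism from the space of traces on Proj_A onto SLF(A). -/
/-!
A finitely generated projective `A`-module `V` has vectors `v_j` and functionals `c_j : V → A` with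
`x = ∑ c_j(x) v_j`, so every endomorphism `f` is a sum of maps `V → A → V`, namely
`x ↦ c_j(x) f(v_j)`. Cyclicity of a trace moves each summand to the regular module, where it becomes
right multiplication by `c_j(f(v_j))`; hence `t_V(f) = ∑ t_A(ρ_{c_j(f(v_j))})` is determined by the
form `a ↦ t_A(ρ_a)`. Conversely, for a symmetric form `φ` the expression `∑ φ(c_j(f(v_j)))` (the
Hattori–Stallings trace followed by `φ`) is cyclic, which also makes it independent of `v` and `c`.
-/

noncomputable section

universe u

variable (k : Type u) [Field k] (A : Type u) [Ring A] [Algebra k A]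

/-- A finite dual basis of an `S`-module `P`: vectors and coordinate functionals that recover every
element of `P`. The vectors need not be linearly independent, and `P` has such a system exactly when
it is finitely generated and projective. -/
structure FiniteDualBasis (ι S P : Type*) [Fintype ι] [Semiring S] [AddCommMonoid P]
    [Module S P] where
  vec : ι → P
  coord : ι → P →ₗ[S] S
  sum_coord_smul_vec (x : P) : ∑ i, coord i x • vec i = x

namespace FiniteDualBasis

section Module

variable {ι S P Q : Type*} [Fintype ι] [Semiring S] [AddCommMonoid P] [Module S P]
  [AddCommMonoid Q] [Module S Q]

variable (S) in
/-- The dual basis of the regular module consisting of the unit and the identity functional. -/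
@[simps]
def regular : FiniteDualBasis Unit S S where
  vec _ := 1
  coord _ := LinearMap.id
  sum_coord_smul_vec x := by simp

variable (S P) in
theorem exists_fin [Module.Finite S P] [Module.Projective S P] :
    ∃ n, Nonempty (FiniteDualBasis (Fin n) S P) := by
  obtain ⟨n, p, s, -, -, hps⟩ := Module.Finite.exists_comp_eq_id_of_projective S P
  exact ⟨n, ⟨{
    vec := fun i => p (Pi.single i 1)
    coord := fun i => LinearMap.proj i ∘ₗ s
    sum_coord_smul_vec := fun x => calc
      ∑ i, s x i • p (Pi.single i 1) = p (∑ i, s x i • Pi.single i 1) := by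
        simp only [map_sum, map_smul]
      _ = p (s x) := by rw [← pi_eq_sum_univ']
      _ = x := LinearMap.congr_fun hps x }⟩⟩

theorem apply_eq_sum (B : FiniteDualBasis ι S P) (f : P →ₗ[S] Q) (x : P) :
    f x = ∑ i, B.coord i x • f (B.vec i) := by
  conv_lhs => rw [← B.sum_coord_smul_vec x]
  simp only [map_sum, map_smul]

theorem eq_sum_toSpanSingleton_comp_coord (B : FiniteDualBasis ι S P) (f : P →ₗ[S] Q) :
    f = ∑ i, LinearMap.toSpanSingleton S Q (f (B.vec i)) ∘ₗ B.coord i := by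
  ext x
  simpa using B.apply_eq_sum f x

end Module

section Trace

variable {ι κ R S P Q M : Type*} [Fintype ι] [Fintype κ] [CommSemiring R] [Semiring S]
  [Algebra R S] [AddCommMonoid P] [Module R P] [Module S P] [IsScalarTower R S P]
  [AddCommMonoid Q] [Module S Q] [AddCommMonoid M] [Module R M]

/-- The Hattori–Stallings trace of an endomorphism, evaluated by a linear map `φ`. It is computed in
a given dual basis; for symmetric `φ` the choice does not matter. -/
@[simps]
def trace (B : FiniteDualBasis ι S P) (φ : S →ₗ[R] M) : (P →ₗ[S] P) →ₗ[R] M where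
  toFun f := ∑ i, φ (B.coord i (f (B.vec i)))
  map_add' f g := by simp [Finset.sum_add_distrib]
  map_smul' r f := by simp [LinearMap.map_smul_of_tower, Finset.smul_sum]

theorem trace_regular (φ : S →ₗ[R] M) (f : S →ₗ[S] S) : (regular S).trace φ f = φ (f 1) := by
  simp

theorem trace_comp (B : FiniteDualBasis ι S P) (C : FiniteDualBasis κ S Q) (φ : S →ₗ[R] M)
    (f : P →ₗ[S] Q) (g : Q →ₗ[S] P) :
    B.trace φ (g ∘ₗ f) = ∑ i, ∑ j, φ (C.coord j (f (B.vec i)) * B.coord i (g (C.vec j))) := by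
  refine Finset.sum_congr rfl fun i _ => ?_
  have expand := C.apply_eq_sum (B.coord i ∘ₗ g) (f (B.vec i))
  simpa using congrArg φ expand

theorem trace_comp_comm [Module R Q] [IsScalarTower R S Q] (B : FiniteDualBasis ι S P)
    (C : FiniteDualBasis κ S Q) {φ : S →ₗ[R] M} (hφ : ∀ x y, φ (x * y) = φ (y * x))
    (f : P →ₗ[S] Q) (g : Q →ₗ[S] P) : B.trace φ (g ∘ₗ f) = C.trace φ (f ∘ₗ g) := by
  rw [trace_comp B C, trace_comp C B, Finset.sum_comm]
  exact Finset.sum_congr rfl fun j _ => Finset.sum_congr rfl fun i _ => hφ _ _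

theorem trace_eq_trace (B : FiniteDualBasis ι S P) (C : FiniteDualBasis κ S P) {φ : S →ₗ[R] M}
    (hφ : ∀ x y, φ (x * y) = φ (y * x)) (f : P →ₗ[S] P) : B.trace φ f = C.trace φ f :=
  trace_comp_comm B C hφ f LinearMap.id

end Trace

end FiniteDualBasis

section ProjectiveModules

variable {k A}

theorem rho_mul (x y : A) : rho A (x * y) = rho A y ∘ₗ rho A x :=
  LinearMap.ext fun z => (mul_assoc z x y).symm

theorem IsTrace.apply_eq_trace {t : TraceFam k A} (ht : IsTrace k A t) [h1 : Module.Finite k A]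
    {φ : A →ₗ[k] k} (hφ : ∀ a, t A h1 inferInstance (rho A a) = φ a) {V : Type u}
    [AddCommGroup V] [Module k V] [Module A V] [IsScalarTower k A V] (hV1 : Module.Finite k V)
    (hV2 : Module.Projective A V) {ι : Type*} [Fintype ι] (B : FiniteDualBasis ι A V)
    (f : V →ₗ[A] V) : t V hV1 hV2 f = B.trace φ f := by
  let toV (i : ι) : A →ₗ[A] V := LinearMap.toSpanSingleton A V (f (B.vec i))
  have coord_comp_toV (i : ι) : B.coord i ∘ₗ toV i = rho A (B.coord i (f (B.vec i))) :=
    LinearMap.comp_toSpanSingleton _ _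
  calc
    t V hV1 hV2 f = ∑ i, t V hV1 hV2 (toV i ∘ₗ B.coord i) := by
      rw [← map_sum, ← B.eq_sum_toSpanSingleton_comp_coord f]
    _ = ∑ i, t A h1 inferInstance (B.coord i ∘ₗ toV i) :=
      Finset.sum_congr rfl fun i _ => ht V A hV1 hV2 h1 inferInstance (B.coord i) (toV i)
    _ = B.trace φ f := by simp only [coord_comp_toV, hφ, FiniteDualBasis.trace_apply]

/-- The family of functionals on `Proj_A` induced by a linear form `φ`. Each component is computed
in a chosen dual basis; the family is a trace in the sense of `IsTrace` when `φ` is symmetric. -/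
def TraceFam.ofForm (φ : A →ₗ[k] k) : TraceFam k A := fun V _ _ _ _ _ _ =>
  have : Module.Finite A V := Module.Finite.of_restrictScalars_finite k A V
  (FiniteDualBasis.exists_fin A V).choose_spec.some.trace φ

theorem IsTrace.eq_ofForm {t : TraceFam k A} (ht : IsTrace k A t) [h1 : Module.Finite k A]
    {φ : A →ₗ[k] k} (hφ : ∀ a, t A h1 inferInstance (rho A a) = φ a) : t = TraceFam.ofForm φ := by
  funext V _ _ _ _ hV1 hV2
  exact LinearMap.ext fun f => ht.apply_eq_trace hφ hV1 hV2 _ f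

namespace TraceFam

theorem ofForm_zero_apply {V : Type u} [AddCommGroup V] [Module k V] [Module A V]
    [IsScalarTower k A V] (hV1 : Module.Finite k V) (hV2 : Module.Projective A V)
    (f : V →ₗ[A] V) : ofForm (0 : A →ₗ[k] k) V hV1 hV2 f = 0 := by
  simp [ofForm]

theorem ofForm_apply_eq_trace {φ : A →ₗ[k] k} (hφ : ∀ x y, φ (x * y) = φ (y * x))
    {V : Type u} [AddCommGroup V] [Module k V] [Module A V] [IsScalarTower k A V]
    (hV1 : Module.Finite k V) (hV2 : Module.Projective A V) {ι : Type*} [Fintype ι]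
    (B : FiniteDualBasis ι A V) (f : V →ₗ[A] V) :
    ofForm φ V hV1 hV2 f = B.trace φ f :=
  FiniteDualBasis.trace_eq_trace _ B hφ f

theorem isTrace_ofForm {φ : A →ₗ[k] k} (hφ : ∀ x y, φ (x * y) = φ (y * x)) :
    IsTrace k A (ofForm φ) := by
  intro U _ _ _ _ V _ _ _ _ hU1 hU2 hV1 hV2 f g
  exact FiniteDualBasis.trace_comp_comm _ _ hφ f g

theorem ofForm_rho {φ : A →ₗ[k] k} (hφ : ∀ x y, φ (x * y) = φ (y * x)) (h1 : Module.Finite k A)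
    (h2 : Module.Projective A A) (a : A) : ofForm φ A h1 h2 (rho A a) = φ a := by
  rw [ofForm_apply_eq_trace hφ h1 h2 (.regular A), FiniteDualBasis.trace_regular]
  exact congrArg φ (one_mul a)

end TraceFam

end ProjectiveModules

/-- a trace on `Proj_A` vanishing on the regular module vanishes
everywhere; consequently `t ↦ (a ↦ t_A(ρ_a))` is a (linear) isomorphism from the space of
traces on `Proj_A` onto `SLF(A)`: the image of a trace is a symmetric linear form, and
every symmetric linear form comes from a unique trace. -/
theorem statement_3 [Module.Finite k A] :
    (∀ t : TraceFam k A, IsTrace k A t →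
      (∀ (h1 : Module.Finite k A) (h2 : Module.Projective A A) (a : A),
        t A h1 h2 (rho A a) = 0) →
      ∀ (V : Type u) [AddCommGroup V] [Module k V] [Module A V] [IsScalarTower k A V]
        (hV1 : Module.Finite k V) (hV2 : Module.Projective A V) (f : V →ₗ[A] V),
        t V hV1 hV2 f = 0)
    ∧ (∀ t : TraceFam k A, IsTrace k A t →
        ∀ (h1 : Module.Finite k A) (h2 : Module.Projective A A) (x y : A),
          t A h1 h2 (rho A (x * y)) = t A h1 h2 (rho A (y * x)))
    ∧ (∀ φ : A →ₗ[k] k, (∀ x y : A, φ (x * y) = φ (y * x)) →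
        ∃! t : { t : TraceFam k A // IsTrace k A t },
          ∀ (h1 : Module.Finite k A) (h2 : Module.Projective A A) (a : A),
            (t : TraceFam k A) A h1 h2 (rho A a) = φ a) := by
  refine ⟨fun t ht h0 V _ _ _ _ hV1 hV2 f => ?vanishing, fun t ht h1 h2 x y => ?symmetric,
    fun φ hφ => ?existsUnique⟩
  case vanishing =>
    rw [ht.eq_ofForm (φ := 0) (h0 _ _)]
    exact TraceFam.ofForm_zero_apply hV1 hV2 f
  case symmetric =>
    rw [rho_mul x y, rho_mul y x]
    exact ht A A h1 h2 h1 h2 (rho A x) (rho A y)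
  case existsUnique =>
    refine ⟨⟨TraceFam.ofForm φ, TraceFam.isTrace_ofForm hφ⟩, TraceFam.ofForm_rho hφ, ?_⟩
    rintro ⟨s, hs⟩ hsφ
    exact Subtype.ext (hs.eq_ofForm (hsφ _ _))
end
end
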